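/- arXiv:2106.00906 — 9 statements merged into one kernel-verified Lean document; each statement's English description precedes it below -/
import Mathlib

section
/- Let X be a finite-dimensional real inner product space, let C ⊆ X be a nonempty closed convex set, and let F : X → X be continuous and α-strongly monotone for some α > 0. Then there exists a unique point x∘ ∈ C solving the variational inequality VI(F, C), i.e., a unique x∘ ∈ C with ⟨F(x∘), x − x∘⟩ ≥ 0 for all x ∈ C. -/
open RealInnerProductSpace

theorem vi_finite {X : Type*} [NormedAddCommGroup X] [InnerProductSpace ℝ X]
    (K : Set X) (hK : IsCompact K) (hKne : K.Nonempty) (hKcv : Convex ℝ K)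
    (F : X → X) (hm : ∀ x y : X, 0 ≤ ⟪F x - F y, x - y⟫)
    {ι : Type*} [Fintype ι] [Nonempty ι] (y : ι → X) (hy : ∀ i, y i ∈ K) :
    ∃ x ∈ K, ∀ i, 0 ≤ ⟪F (y i), y i - x⟫ := by
  classical
  let f : (ι → ℝ) → X → ℝ := fun μ x => ∑ i, μ i * ⟪F (y i), y i - x⟫
  have hne : (stdSimplex ℝ ι).Nonempty :=
    ⟨_, single_mem_stdSimplex ℝ (Classical.arbitrary ι)⟩
  obtain ⟨a, ha, b, hb, hs⟩ := Sion.exists_isSaddlePointOn (f := f) hne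
    (convex_stdSimplex ℝ ι) (isCompact_stdSimplex ℝ ι)
    (fun x _ => (Continuous.lowerSemicontinuous (by fun_prop)).lowerSemicontinuousOn _)
    (fun x _ => by
      refine ConvexOn.quasiconvexOn ⟨convex_stdSimplex ℝ ι, ?_⟩
      intro p _ q _ s t _ _ _
      refine le_of_eq ?_
      simp only [f, smul_eq_mul, Finset.mul_sum, ← Finset.sum_add_distrib, Pi.add_apply,
        Pi.smul_apply]
      exact Finset.sum_congr rfl fun i _ => by ring)
    hKcv hKne hK
    (fun x _ => (Continuous.upperSemicontinuous (by fun_prop)).upperSemicontinuousOn _)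
    (fun x _ => by
      refine ConcaveOn.quasiconcaveOn ⟨hKcv, ?_⟩
      intro p _ q _ s t _ _ hst
      refine le_of_eq ?_
      simp only [f, smul_eq_mul, Finset.mul_sum, ← Finset.sum_add_distrib]
      refine Finset.sum_congr rfl fun i _ => ?_
      simp only [inner_sub_right, inner_add_right, inner_smul_right]
      linear_combination x i * ⟪F (y i), y i⟫ * hst)
  refine ⟨b, hb, fun i => ?_⟩
  have hz : ∑ j, a j • y j ∈ K := hKcv.sum_mem (fun j _ => ha.1 j) ha.2 (fun j _ => hy j)
  have h1 := hs _ (single_mem_stdSimplex ℝ i) _ hz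
  have h2 : f (Pi.single i 1) b = ⟪F (y i), y i - b⟫ := by
    simp [f, Pi.single_apply]
  rw [h2] at h1
  refine le_trans ?_ h1
  have h3 : f a (∑ j, a j • y j) = ∑ i, ∑ j, a i * a j * ⟪F (y i), y i - y j⟫ := by
    refine Finset.sum_congr rfl fun i _ => ?_
    have : y i - ∑ j, a j • y j = ∑ j, a j • (y i - y j) := by
      simp only [smul_sub, Finset.sum_sub_distrib, ← Finset.sum_smul, ha.2, one_smul]
    rw [this, inner_sum, Finset.mul_sum]
    exact Finset.sum_congr rfl fun j _ => by rw [inner_smul_right]; ring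
  have h4 : f a (∑ j, a j • y j) = ∑ i, ∑ j, a i * a j * ⟪F (y j), y j - y i⟫ := by
    rw [h3, Finset.sum_comm]
    exact Finset.sum_congr rfl fun i _ => Finset.sum_congr rfl fun j _ => by ring
  have h5 : 0 ≤ f a (∑ j, a j • y j) + f a (∑ j, a j • y j) := by
    nth_rewrite 1 [h3]
    rw [h4]
    simp only [← Finset.sum_add_distrib]
    refine Finset.sum_nonneg fun i _ => Finset.sum_nonneg fun j _ => ?_
    have h6 : a i * a j * ⟪F (y i), y i - y j⟫ + a i * a j * ⟪F (y j), y j - y i⟫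
        = a i * a j * ⟪F (y i) - F (y j), y i - y j⟫ := by
      simp only [inner_sub_right, inner_sub_left]; ring
    rw [h6]
    exact mul_nonneg (mul_nonneg (ha.1 i) (ha.1 j)) (hm _ _)
  linarith

theorem vi_minty {X : Type*} [NormedAddCommGroup X] [InnerProductSpace ℝ X]
    (C : Set X) (hC : Convex ℝ C) (F : X → X) (hF : Continuous F) (x : X) (hx : x ∈ C)
    (h : ∀ y ∈ C, 0 ≤ ⟪F y, y - x⟫) : ∀ y ∈ C, 0 ≤ ⟪F x, y - x⟫ := by
  intro y hy
  have hc : Continuous fun t : ℝ => ⟪F (x + t • (y - x)), y - x⟫ := by fun_prop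
  have ht : Filter.Tendsto (fun t : ℝ => ⟪F (x + t • (y - x)), y - x⟫)
      (nhdsWithin 0 (Set.Ioi 0)) (nhds ⟪F x, y - x⟫) := by
    have := hc.tendsto 0
    simp only [zero_smul, add_zero] at this
    exact this.mono_left nhdsWithin_le_nhds
  refine ge_of_tendsto ht ?_
  filter_upwards [Ioo_mem_nhdsGT (zero_lt_one' ℝ)] with t ht
  have h1 := h _ (hC.add_smul_sub_mem hx hy ⟨ht.1.le, ht.2.le⟩)
  rw [add_sub_cancel_left, inner_smul_right] at h1
  exact (mul_nonneg_iff_of_pos_left ht.1).1 h1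

theorem vi_compact {X : Type*} [NormedAddCommGroup X] [InnerProductSpace ℝ X]
    (K : Set X) (hK : IsCompact K) (hKne : K.Nonempty) (hKcv : Convex ℝ K)
    (F : X → X) (hF : Continuous F) (hm : ∀ x y : X, 0 ≤ ⟪F x - F y, x - y⟫) :
    ∃ x ∈ K, ∀ y ∈ K, 0 ≤ ⟪F x, y - x⟫ := by
  obtain ⟨x, hx, hx'⟩ := hK.inter_iInter_nonempty
    (fun y : K => {x : X | 0 ≤ ⟪F y, (y : X) - x⟫})
    (fun y => isClosed_le continuous_const (by fun_prop))
    (fun u => by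
      rcases u.eq_empty_or_nonempty with rfl | hu
      · simpa using hKne
      · have : Nonempty u := hu.to_subtype
        obtain ⟨x, hx, h⟩ := vi_finite K hK hKne hKcv F hm (fun i : u => ((i : K) : X))
          (fun i => i.1.2)
        refine ⟨x, hx, ?_⟩
        simp only [Set.mem_iInter]
        exact fun i hi => h ⟨i, hi⟩)
  simp only [Set.mem_iInter] at hx'
  exact ⟨x, hx, vi_minty K hKcv F hF x hx fun y hy => hx' ⟨y, hy⟩⟩

/-- In a finite-dimensional real inner product space, for a nonempty closed convex set
`C` and a continuous, `α`-strongly monotone map `F` (with `α > 0`), the variational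
inequality `VI(F, C)` has a unique solution `x₀`, i.e. a unique `x₀ ∈ C` with
`⟪F x₀, x - x₀⟫ ≥ 0` for all `x ∈ C`. -/
theorem stmt_0 {X : Type*} [NormedAddCommGroup X] [InnerProductSpace ℝ X]
    [FiniteDimensional ℝ X]
    (C : Set X) (hCne : C.Nonempty) (hCcl : IsClosed C) (hCcv : Convex ℝ C)
    (F : X → X) (hFcont : Continuous F) (α : ℝ) (hα : 0 < α)
    (hmono : ∀ x y : X, α * ‖x - y‖ ^ 2 ≤ ⟪F x - F y, x - y⟫) :
    ∃! x₀ : X, x₀ ∈ C ∧ ∀ x ∈ C, 0 ≤ ⟪F x₀, x - x₀⟫ := by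
  have hm : ∀ x y : X, 0 ≤ ⟪F x - F y, x - y⟫ := fun x y =>
    le_trans (by positivity) (hmono x y)
  refine existsUnique_of_exists_of_unique ?_ ?_
  · obtain ⟨p, hp⟩ := hCne
    have : ProperSpace X := FiniteDimensional.proper ℝ X
    set R : ℝ := ‖F p‖ / α + 1 with hR
    have hRpos : 0 < R := by positivity
    obtain ⟨x, ⟨hxC, hxB⟩, hx⟩ := vi_compact (C ∩ Metric.closedBall p R)
      ((isCompact_closedBall p R).inter_left hCcl)
      ⟨p, hp, Metric.mem_closedBall_self hRpos.le⟩
      (hCcv.inter (convex_closedBall p R)) F hFcont hm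
    have hxR : ‖x - p‖ < R := by
      have h1 := hx p ⟨hp, Metric.mem_closedBall_self hRpos.le⟩
      have h2 := hmono x p
      have h3 : ⟪F x - F p, x - p⟫ = - ⟪F x, p - x⟫ - ⟪F p, x - p⟫ := by
        simp only [inner_sub_right, inner_sub_left]; ring
      have h4 := (abs_le.1 (abs_real_inner_le_norm (F p) (x - p))).1
      have h5 : α * ‖x - p‖ ^ 2 ≤ ‖F p‖ * ‖x - p‖ := by linarith
      have h6 : ‖x - p‖ ≤ ‖F p‖ / α := by
        rw [le_div_iff₀ hα]
        rcases (norm_nonneg (x - p)).eq_or_lt with h0 | h0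
        · rw [← h0]; simp
        · refine le_of_mul_le_mul_right ?_ h0
          linarith
      linarith
    refine ⟨x, hxC, fun y hy => ?_⟩
    have hc : Continuous fun t : ℝ => ‖x + t • (y - x) - p‖ := by fun_prop
    have hev : ∀ᶠ t in nhdsWithin (0 : ℝ) (Set.Ioi 0), ‖x + t • (y - x) - p‖ < R := by
      refine nhdsWithin_le_nhds ((hc.tendsto 0).eventually_lt_const ?_)
      simpa using hxR
    obtain ⟨t, h1, ht⟩ := (hev.and (Ioo_mem_nhdsGT (zero_lt_one' ℝ))).exists
    have h2 := hx (x + t • (y - x)) ⟨hCcv.add_smul_sub_mem hxC hy ⟨ht.1.le, ht.2.le⟩, by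
      rw [mem_closedBall_iff_norm]; exact h1.le⟩
    rw [add_sub_cancel_left, inner_smul_right] at h2
    exact (mul_nonneg_iff_of_pos_left ht.1).1 h2
  · rintro x y ⟨hx, hx'⟩ ⟨hy, hy'⟩
    have h1 := hx' y hy
    have h2 := hy' x hx
    have h3 := hmono x y
    have h4 : ⟪F x - F y, x - y⟫ = - ⟪F x, y - x⟫ - ⟪F y, x - y⟫ := by
      simp only [inner_sub_right, inner_sub_left]; ring
    have h5 : α * ‖x - y‖ ^ 2 ≤ 0 := by linarith
    have h6 : ‖x - y‖ ^ 2 ≤ 0 := by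
      by_contra h
      push Not at h
      nlinarith [mul_pos hα h]
    have h7 : ‖x - y‖ = 0 := by
      have := le_antisymm h6 (sq_nonneg _)
      exact pow_eq_zero_iff (two_ne_zero) |>.1 this
    exact sub_eq_zero.1 (norm_eq_zero.1 h7)
end

section
/- Let X be a real inner product space, D a metric space, C ⊆ X a set, and F : X × D → X a map such that for every d ∈ D the map F(·, d) is α-strongly monotone for a fixed α > 0, and such that ‖F(x, d₁) − F(x, d₂)‖ ≤ L · dist(d₁, d₂) for all x ∈ C and all d₁, d₂ ∈ D. If x₁ is a solution of VI(F(·, d₁), C) and x₂ is a solution of VI(F(·, d₂), C), then ‖x₁ − x₂‖ ≤ (L/α) · dist(d₁, d₂). In particular, the solution map d ↦ x_d of the parametrized variational inequality is (L/α)-Lipschitz continuous. -/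
open RealInnerProductSpace

/-- Lipschitz dependence of the solution of a parametrized variational inequality on the
parameter: if `F (·, d)` is `α`-strongly monotone for every `d` and `F (x, ·)` is
`L`-Lipschitz in the parameter (uniformly over `x ∈ C`), then solutions of
`VI(F(·, d₁), C)` and `VI(F(·, d₂), C)` satisfy `‖x₁ - x₂‖ ≤ (L / α) * dist d₁ d₂`. -/
theorem stmt_2 {X : Type*} [NormedAddCommGroup X] [InnerProductSpace ℝ X]
    {D : Type*} [MetricSpace D]
    (C : Set X) (F : X → D → X) (α L : ℝ) (hα : 0 < α)
    (hmono : ∀ d : D, ∀ x y : X, α * ‖x - y‖ ^ 2 ≤ ⟪F x d - F y d, x - y⟫)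
    (hLip : ∀ x ∈ C, ∀ d₁ d₂ : D, ‖F x d₁ - F x d₂‖ ≤ L * dist d₁ d₂)
    (d₁ d₂ : D) (x₁ x₂ : X)
    (hx₁ : x₁ ∈ C ∧ ∀ x ∈ C, 0 ≤ ⟪F x₁ d₁, x - x₁⟫)
    (hx₂ : x₂ ∈ C ∧ ∀ x ∈ C, 0 ≤ ⟪F x₂ d₂, x - x₂⟫) :
    ‖x₁ - x₂‖ ≤ (L / α) * dist d₁ d₂ := by
  obtain ⟨hC₁, h₁⟩ := hx₁
  obtain ⟨hC₂, h₂⟩ := hx₂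
  have a1 := h₁ x₂ hC₂
  have a2 := h₂ x₁ hC₁
  have m := hmono d₁ x₁ x₂
  have l := hLip x₂ hC₂ d₂ d₁
  rw [dist_comm] at l
  have cs := real_inner_le_norm (F x₂ d₂ - F x₂ d₁) (x₁ - x₂)
  have hneg : inner ℝ (F x₁ d₁) (x₂ - x₁) = - inner ℝ (F x₁ d₁) (x₁ - x₂) := by
    rw [← inner_neg_right, neg_sub]
  rw [hneg] at a1
  rw [inner_sub_left] at m cs
  have hn := norm_nonneg (x₁ - x₂)
  have hl := mul_le_mul_of_nonneg_right l hn
  have key : α * ‖x₁ - x₂‖ ^ 2 ≤ L * dist d₁ d₂ * ‖x₁ - x₂‖ := by linarith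
  rw [div_mul_eq_mul_div, le_div_iff₀ hα]
  rcases hn.eq_or_lt with h0 | hpos
  · rw [← h0, zero_mul]
    exact (norm_nonneg _).trans l
  · refine le_of_mul_le_mul_right ?_ hpos
    linarith [key, sq ‖x₁ - x₂‖, mul_comm α (‖x₁ - x₂‖ ^ 2),
      show ‖x₁ - x₂‖ * α * ‖x₁ - x₂‖ = α * ‖x₁ - x₂‖ ^ 2 by ring]
end

section
/- Let K ∈ ℕ, and for each k let X_k be a real inner product space and V_k ⊆ X_k a convex set; let X = ∏_k X_k (with the product inner product) and C = ∏_k V_k. For each k let u_k : X → ℝ be such that for every x ∈ X the function y ↦ u_k(x with its k-th component replaced by y) is convex and differentiable on X_k, and let ∇_k u_k(x) ∈ X_k denote the gradient of this function at x_k. Define F : X → X by F(x) = (∇_1 u_1(x), …, ∇_K u_K(x)). Then a point x∘ ∈ C is a Nash equilibrium, i.e., for every k and every y ∈ V_k one has u_k(x∘ with its k-th component replaced by y) ≥ u_k(x∘), if and only if x∘ is a solution of the variational inequality VI(F, C). -/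
open RealInnerProductSpace

theorem aux_grad_ineq {E : Type*} [NormedAddCommGroup E] [NormedSpace ℝ E] {f : E → ℝ}
    {f' : E →L[ℝ] ℝ} {a : E} (hc : ConvexOn ℝ Set.univ f) (hf : HasFDerivAt f f' a) (y : E) :
    f' (y - a) ≤ f y - f a := by
  have h1 : ConvexOn ℝ Set.univ (f ∘ (AffineMap.lineMap a y : ℝ →ᵃ[ℝ] E)) := by
    simpa using hc.comp_affineMap (AffineMap.lineMap a y : ℝ →ᵃ[ℝ] E)
  have h2 : HasDerivAt (f ∘ (AffineMap.lineMap a y : ℝ →ᵃ[ℝ] E)) (f' (y - a)) 0 := by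
    have h3 : HasDerivAt (AffineMap.lineMap a y : ℝ →ᵃ[ℝ] E) (y - a) (0 : ℝ) :=
      AffineMap.hasDerivAt_lineMap
    refine HasFDerivAt.comp_hasDerivAt (0 : ℝ) ?_ h3
    simpa using hf
  have h4 := h1.le_slope_of_hasDerivAt (Set.mem_univ 0) (Set.mem_univ 1) one_pos h2
  simpa [slope_def_field] using h4

theorem aux_min {E : Type*} [NormedAddCommGroup E] [NormedSpace ℝ E] {f : E → ℝ}
    {f' : E →L[ℝ] ℝ} {a : E} {V : Set E} (hV : Convex ℝ V) (ha : a ∈ V)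
    (hf : HasFDerivAt f f' a) (hm : ∀ y ∈ V, f a ≤ f y) {y : E} (hy : y ∈ V) :
    0 ≤ f' (y - a) := by
  have hmin : IsLocalMinOn f V a := IsMinOn.localize (fun z hz => hm z hz)
  exact hmin.hasFDerivWithinAt_nonneg hf.hasFDerivWithinAt
    (sub_mem_posTangentConeAt_of_segment_subset (hV.segment_subset ha hy))

/-- Nash equilibria coincide with solutions of the variational inequality for the game
gradient.  Here `X k` are the players' strategy spaces, `V k ⊆ X k` the convex action
sets, `u k` the cost functions (each convex and differentiable in the player's own
variable, with partial gradient `G k x`, witnessed via `HasFDerivAt` with derivative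
`⟪G k x, ·⟫`), and the game gradient `F : ∏ k, X k → ∏ k, X k` is
`F x = (G 1 x, …, G K x)`.  A point `x₀` in `C = ∏ k, V k` is a Nash equilibrium iff it
solves `VI(F, C)` with respect to the product inner product (`PiLp 2`). -/
theorem stmt_3 {K : ℕ} {X : Fin K → Type*}
    [∀ k, NormedAddCommGroup (X k)] [∀ k, InnerProductSpace ℝ (X k)]
    (V : ∀ k, Set (X k)) (hV : ∀ k, Convex ℝ (V k))
    (u : ∀ _ : Fin K, (∀ j, X j) → ℝ)
    (G : ∀ k : Fin K, (∀ j, X j) → X k)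
    (hconv : ∀ (k) (x : ∀ j, X j),
      ConvexOn ℝ Set.univ (fun y : X k => u k (Function.update x k y)))
    (hgrad : ∀ (k) (x : ∀ j, X j),
      HasFDerivAt (fun y : X k => u k (Function.update x k y)) (innerSL ℝ (G k x)) (x k))
    (F : PiLp 2 X → PiLp 2 X) (hF : ∀ (x : PiLp 2 X) (k : Fin K), F x k = G k x)
    (x₀ : PiLp 2 X) (hx₀ : ∀ k, x₀ k ∈ V k) :
    (∀ k, ∀ y ∈ V k, u k x₀ ≤ u k (Function.update x₀ k y)) ↔
      ((∀ k, x₀ k ∈ V k) ∧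
        ∀ x : PiLp 2 X, (∀ k, x k ∈ V k) → 0 ≤ ⟪F x₀, x - x₀⟫) := by
  constructor
  · intro h
    refine ⟨hx₀, fun x hx => ?_⟩
    rw [PiLp.inner_apply]
    refine Finset.sum_nonneg fun k _ => ?_
    have := aux_min (hV k) (hx₀ k) (hgrad k x₀) (by simpa using h k) (hx k)
    rw [hF]
    simpa using this
  · rintro ⟨-, h⟩ k y hy
    have h1 := h (WithLp.toLp 2 (Function.update x₀ k y)) (by
      intro j
      by_cases hj : j = k
      · subst hj; simpa using hy
      · simpa [hj] using hx₀ j)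
    rw [PiLp.inner_apply, Finset.sum_eq_single k] at h1
    · have h2 := aux_grad_ineq (hconv k x₀) (hgrad k x₀) y
      rw [hF] at h1
      simp only [Function.update_eq_self, innerSL_apply_apply] at h2
      simp only [PiLp.sub_apply, Function.update_self] at h1
      linarith
    · intro j _ hj
      simp [hj]
    · simp
end

section
/- Let X be a complete real inner product space, let C¹, C² ⊆ X be nonempty closed convex sets, and let F : X → X be any map. Define the Davis–Yin operator T(z) = z − P_{C¹}(z) + P_{C²}(2P_{C¹}(z) − z − F(P_{C¹}(z))). Then for every x ∈ X the following are equivalent: (i) there exists z ∈ X with z = T(z) and x = P_{C¹}(z); (ii) x ∈ C¹ ∩ C² and −F(x) ∈ N_{C¹}(x) + N_{C²}(x), i.e., there exist u ∈ N_{C¹}(x) and v ∈ N_{C²}(x) with F(x) + u + v = 0. -/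
open RealInnerProductSpace

theorem dy_proj_inner {X : Type*} [NormedAddCommGroup X] [InnerProductSpace ℝ X]
    {K : Set X} (hK : Convex ℝ K) {z p : X} (hp : p ∈ K)
    (hmin : ∀ x ∈ K, ‖z - p‖ ≤ ‖z - x‖) : ∀ w ∈ K, inner ℝ (z - p) (w - p) ≤ 0 := by
  rw [← norm_eq_iInf_iff_real_inner_le_zero hK hp]
  have : Nonempty K := ⟨⟨p, hp⟩⟩
  apply le_antisymm
  · exact le_ciInf fun w => hmin w w.2
  · exact ciInf_le (f := fun w : K => ‖z - w‖)
      ⟨0, Set.forall_mem_range.2 fun _ => norm_nonneg _⟩ ⟨p, hp⟩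

theorem dy_proj_unique {X : Type*} [NormedAddCommGroup X] [InnerProductSpace ℝ X]
    {K : Set X} (hK : Convex ℝ K) {z p x : X} (hp : p ∈ K)
    (hmin : ∀ x ∈ K, ‖z - p‖ ≤ ‖z - x‖) (hx : x ∈ K)
    (h : ∀ w ∈ K, inner ℝ (z - x) (w - x) ≤ 0) : p = x := by
  have h1 := dy_proj_inner hK hp hmin x hx
  have h2 := h p hp
  have h3 : inner ℝ (p - x) (p - x) = inner ℝ (z - x) (p - x) + inner ℝ (z - p) (x - p) := by
    rw [← neg_sub p x, inner_neg_right, ← sub_eq_add_neg, ← inner_sub_left]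
    congr 1
    abel
  have h4 : inner ℝ (p - x) (p - x) ≤ 0 := by linarith
  exact sub_eq_zero.1 ((inner_self_eq_zero (𝕜 := ℝ)).1 (le_antisymm h4 real_inner_self_nonneg))

/-- Fixed points of the Davis–Yin operator
`T z = z - P₁ z + P₂ (2 • P₁ z - z - F (P₁ z))` (where `P₁, P₂` are the metric
projections onto nonempty closed convex sets `C₁, C₂`) correspond exactly to points
`x ∈ C₁ ∩ C₂` with `-F x ∈ N_{C₁}(x) + N_{C₂}(x)`. -/
theorem stmt_7 {X : Type*} [NormedAddCommGroup X] [InnerProductSpace ℝ X] [CompleteSpace X]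
    (C₁ C₂ : Set X)
    (h₁ne : C₁.Nonempty) (h₁cl : IsClosed C₁) (h₁cv : Convex ℝ C₁)
    (h₂ne : C₂.Nonempty) (h₂cl : IsClosed C₂) (h₂cv : Convex ℝ C₂)
    (P₁ P₂ : X → X)
    (hP₁ : ∀ z, P₁ z ∈ C₁ ∧ ∀ x ∈ C₁, ‖z - P₁ z‖ ≤ ‖z - x‖)
    (hP₂ : ∀ z, P₂ z ∈ C₂ ∧ ∀ x ∈ C₂, ‖z - P₂ z‖ ≤ ‖z - x‖)
    (F : X → X) (T : X → X)
    (hT : ∀ z, T z = z - P₁ z + P₂ ((2 : ℝ) • P₁ z - z - F (P₁ z)))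
    (x : X) :
    (∃ z, T z = z ∧ x = P₁ z) ↔
      (x ∈ C₁ ∧ x ∈ C₂ ∧ ∃ u v : X,
        (∀ y ∈ C₁, ⟪u, y - x⟫ ≤ 0) ∧ (∀ y ∈ C₂, ⟪v, y - x⟫ ≤ 0) ∧
        F x + u + v = 0) := by
  constructor
  · rintro ⟨z, hz, hx⟩
    have h := hT z
    rw [hz, ← hx] at h
    have hP : P₂ ((2 : ℝ) • x - z - F x) = x := by
      have h' : z - x + P₂ ((2 : ℝ) • x - z - F x) = z - x + x := by rw [← h]; abel
      exact add_left_cancel h'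
    have a := hP₁ z
    rw [← hx] at a
    have b := hP₂ ((2 : ℝ) • x - z - F x)
    rw [hP] at b
    refine ⟨a.1, b.1, z - x, (2 : ℝ) • x - z - F x - x, dy_proj_inner h₁cv a.1 a.2,
      dy_proj_inner h₂cv b.1 b.2, ?_⟩
    rw [two_smul]
    abel
  · rintro ⟨hx1, hx2, u, v, hu, hv, h⟩
    have e1 : P₁ (x + u) = x := by
      refine dy_proj_unique h₁cv (hP₁ _).1 (hP₁ _).2 hx1 ?_
      rw [add_sub_cancel_left]
      exact hu
    have e0 : (2 : ℝ) • x - (x + u) - F x = x + v := by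
      rw [eq_neg_of_add_eq_zero_right h, two_smul]
      abel
    have e2 : P₂ (x + v) = x := by
      refine dy_proj_unique h₂cv (hP₂ _).1 (hP₂ _).2 hx2 ?_
      rw [add_sub_cancel_left]
      exact hv
    refine ⟨x + u, ?_, e1.symm⟩
    rw [hT, e1, e0, e2]
    abel
end

section
/- Let X be a complete real inner product space, let C¹, C² ⊆ X be nonempty closed convex sets with C = C¹ ∩ C² nonempty, and let F : X → X be any map. Assume the normal cone decomposition N_C(x) = N_{C¹}(x) + N_{C²}(x) (Minkowski sum) holds for every x ∈ C (as it does, e.g., when C¹ and C² are polyhedral). Define the Davis–Yin operator T(z) = z − P_{C¹}(z) + P_{C²}(2P_{C¹}(z) − z − F(P_{C¹}(z))). Then a point x∘ ∈ X is a solution of the variational inequality VI(F, C) if and only if there exists z∘ ∈ X with z∘ = T(z∘) and x∘ = P_{C¹}(z∘). -/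
open RealInnerProductSpace

theorem proj_inner_le {X : Type*} [NormedAddCommGroup X] [InnerProductSpace ℝ X]
    (K : Set X) (hK : Convex ℝ K) (z p : X) (hp : p ∈ K)
    (h : ∀ x ∈ K, ‖z - p‖ ≤ ‖z - x‖) : ∀ y ∈ K, ⟪z - p, y - p⟫ ≤ 0 := by
  refine (norm_eq_iInf_iff_real_inner_le_zero hK hp).1 ?_
  have : Nonempty K := ⟨⟨p, hp⟩⟩
  apply le_antisymm
  · exact le_ciInf fun x => h x x.2
  · exact ciInf_le (f := fun x : K => ‖z - (x : X)‖)
      ⟨0, by rintro _ ⟨x, rfl⟩; exact norm_nonneg _⟩ ⟨p, hp⟩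

theorem proj_unique {X : Type*} [NormedAddCommGroup X] [InnerProductSpace ℝ X]
    (K : Set X) (hK : Convex ℝ K) (z q p : X) (hq : q ∈ K)
    (h : ∀ x ∈ K, ‖z - q‖ ≤ ‖z - x‖) (hp : p ∈ K)
    (hn : ∀ y ∈ K, ⟪z - p, y - p⟫ ≤ 0) : q = p := by
  have h1 := proj_inner_le K hK z q hq h p hp
  have h2 := hn q hq
  have h3 : ⟪q - p, q - p⟫ = ⟪z - p, q - p⟫ + ⟪z - q, p - q⟫ := by
    have e : q - p = (z - p) - (z - q) := by abel
    rw [← neg_sub q p, inner_neg_right, ← sub_eq_add_neg, ← inner_sub_left, ← e]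
  have h4 : ⟪q - p, q - p⟫ ≤ 0 := by linarith
  rw [real_inner_self_eq_norm_sq] at h4
  have h5 : ‖q - p‖ = 0 := by nlinarith [norm_nonneg (q - p)]
  exact sub_eq_zero.1 (norm_eq_zero.1 h5)

/-- Assume the normal cone decomposition `N_C(x) = N_{C₁}(x) + N_{C₂}(x)` holds for every
`x ∈ C = C₁ ∩ C₂`.  Then `x₀` solves the variational inequality `VI(F, C)` iff there is a
fixed point `z₀` of the Davis–Yin operator
`T z = z - P₁ z + P₂ (2 • P₁ z - z - F (P₁ z))` with `x₀ = P₁ z₀`. -/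
theorem stmt_8 {X : Type*} [NormedAddCommGroup X] [InnerProductSpace ℝ X] [CompleteSpace X]
    (C₁ C₂ : Set X)
    (h₁ne : C₁.Nonempty) (h₁cl : IsClosed C₁) (h₁cv : Convex ℝ C₁)
    (h₂ne : C₂.Nonempty) (h₂cl : IsClosed C₂) (h₂cv : Convex ℝ C₂)
    (C : Set X) (hC : C = C₁ ∩ C₂) (hCne : C.Nonempty)
    (hNC : ∀ x ∈ C, ∀ w : X,
      (∀ y ∈ C, ⟪w, y - x⟫ ≤ 0) ↔
        ∃ u v : X, (∀ y ∈ C₁, ⟪u, y - x⟫ ≤ 0) ∧ (∀ y ∈ C₂, ⟪v, y - x⟫ ≤ 0) ∧ w = u + v)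
    (P₁ P₂ : X → X)
    (hP₁ : ∀ z, P₁ z ∈ C₁ ∧ ∀ x ∈ C₁, ‖z - P₁ z‖ ≤ ‖z - x‖)
    (hP₂ : ∀ z, P₂ z ∈ C₂ ∧ ∀ x ∈ C₂, ‖z - P₂ z‖ ≤ ‖z - x‖)
    (F : X → X) (T : X → X)
    (hT : ∀ z, T z = z - P₁ z + P₂ ((2 : ℝ) • P₁ z - z - F (P₁ z)))
    (x₀ : X) :
    (x₀ ∈ C ∧ ∀ x ∈ C, 0 ≤ ⟪F x₀, x - x₀⟫) ↔
      (∃ z₀, T z₀ = z₀ ∧ x₀ = P₁ z₀) := by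
  subst hC
  constructor
  · rintro ⟨hx, hvi⟩
    obtain ⟨u, v, hu, hv, huv⟩ := (hNC x₀ hx (-F x₀)).1 (by
      intro y hy
      rw [inner_neg_left]
      linarith [hvi y hy])
    have e1 : P₁ (x₀ + u) = x₀ :=
      proj_unique C₁ h₁cv (x₀ + u) _ x₀ (hP₁ _).1 (hP₁ _).2 hx.1 (by
        simpa using hu)
    have e2 : P₂ (x₀ + v) = x₀ :=
      proj_unique C₂ h₂cv (x₀ + v) _ x₀ (hP₂ _).1 (hP₂ _).2 hx.2 (by
        simpa using hv)
    refine ⟨x₀ + u, ?_, e1.symm⟩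
    have e3 : (2 : ℝ) • x₀ - (x₀ + u) - F x₀ = x₀ + v := by
      rw [sub_eq_add_neg _ (F x₀), huv, two_smul]
      abel
    rw [hT, e1, e3, e2]
    abel
  · rintro ⟨z, hz, rfl⟩
    rw [hT] at hz
    have e : P₂ ((2 : ℝ) • P₁ z - z - F (P₁ z)) = P₁ z := by
      rw [← sub_eq_zero] at hz ⊢
      rw [← hz]
      abel
    have m2 := (hP₂ ((2 : ℝ) • P₁ z - z - F (P₁ z))).1
    have n2 := proj_inner_le C₂ h₂cv _ _ m2 (hP₂ _).2
    rw [e] at m2 n2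
    have hx : P₁ z ∈ C₁ ∩ C₂ := ⟨(hP₁ z).1, m2⟩
    refine ⟨hx, fun y hy => ?_⟩
    have := (hNC _ hx (-F (P₁ z))).2 ⟨_, _,
      proj_inner_le C₁ h₁cv z _ (hP₁ z).1 (hP₁ z).2, n2, by rw [two_smul]; abel⟩ y hy
    rw [inner_neg_left] at this
    linarith
end

section
/- Let X be a complete real inner product space, let C¹, C² ⊆ X be nonempty closed convex sets, and let F : X → X be α-cocoercive with α > 1/2. Then the Davis–Yin operator T(z) = z − P_{C¹}(z) + P_{C²}(2P_{C¹}(z) − z − F(P_{C¹}(z))) is an averaged operator: there exist λ ∈ (0, 1) and a nonexpansive (1-Lipschitz) map S : X → X such that T = (1 − λ)·Id + λ·S. -/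
open RealInnerProductSpace

theorem proj_var {X : Type*} [NormedAddCommGroup X] [InnerProductSpace ℝ X]
    (C : Set X) (hcv : Convex ℝ C) (P : X → X)
    (hP : ∀ z, P z ∈ C ∧ ∀ x ∈ C, ‖z - P z‖ ≤ ‖z - x‖) (z x : X) (hx : x ∈ C) :
    ⟪z - P z, x - P z⟫ ≤ 0 := by
  refine (norm_eq_iInf_iff_real_inner_le_zero hcv (hP z).1).1 ?_ x hx
  have : Nonempty C := ⟨⟨x, hx⟩⟩
  apply le_antisymm
  · exact le_ciInf fun w => (hP z).2 w w.2
  · exact ciInf_le (f := fun w : C => ‖z - w‖)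
      ⟨0, by rintro _ ⟨w, rfl⟩; exact norm_nonneg _⟩ ⟨P z, (hP z).1⟩

theorem proj_firm {X : Type*} [NormedAddCommGroup X] [InnerProductSpace ℝ X]
    (C : Set X) (hcv : Convex ℝ C) (P : X → X)
    (hP : ∀ z, P z ∈ C ∧ ∀ x ∈ C, ‖z - P z‖ ≤ ‖z - x‖) (z y : X) :
    0 ≤ ⟪(z - y) - (P z - P y), P z - P y⟫ := by
  have h1 := proj_var C hcv P hP z (P y) (hP y).1
  have h2 := proj_var C hcv P hP y (P z) (hP z).1
  have e : ⟪(z - y) - (P z - P y), P z - P y⟫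
      = -⟪z - P z, P y - P z⟫ - ⟪y - P y, P z - P y⟫ := by
    simp only [inner_sub_left, inner_sub_right]; ring
  rw [e]; linarith

theorem dy_key {X : Type*} [NormedAddCommGroup X] [InnerProductSpace ℝ X]
    (z p f q : X) (α : ℝ) (hα : 1 / 2 < α)
    (h1 : 0 ≤ ⟪z - p, p⟫) (h2 : 0 ≤ ⟪((2 : ℝ) • p - z - f) - q, q⟫)
    (h3 : α * ‖f‖ ^ 2 ≤ ⟪f, p⟫) :
    ‖z - (2 - 1 / (2 * α)) • (p - q)‖ ≤ ‖z‖ := by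
  have hα0 : 0 < α := by linarith
  have ha : α * (1 / (2 * α)) = 1 / 2 := by field_simp
  have hm : 0 ≤ 2 - 1 / (2 * α) := by
    have : 1 / (2 * α) ≤ 1 := by rw [div_le_one (by linarith)]; linarith
    linarith
  have hb : 0 < 1 / (2 * α) := by positivity
  generalize 1 / (2 * α) = b at *
  have h4 : 0 ≤ ‖f - b • (p - q)‖ ^ 2 := sq_nonneg _
  have key : (2 - b) * ‖p - q‖ ^ 2 ≤ 2 * ⟪z, p - q⟫ := by
    have h5 := mul_nonneg hα0.le h4
    rw [← real_inner_self_eq_norm_sq] at h3 h5 ⊢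
    simp only [inner_sub_left, inner_sub_right, inner_smul_left, inner_smul_right,
      RCLike.conj_to_real] at h1 h2 h3 h5 ⊢
    rw [real_inner_comm f p, real_inner_comm f q, real_inner_comm p q] at *
    have ha2 : ∀ t : ℝ, α * (b * t) = 1 / 2 * t := fun t => by rw [← mul_assoc, ha]
    simp only [mul_sub, ha2] at h5
    linarith
  have : ‖z - (2 - b) • (p - q)‖ ^ 2 ≤ ‖z‖ ^ 2 := by
    rw [norm_sub_sq_real, norm_smul, inner_smul_right, mul_pow, Real.norm_eq_abs, sq_abs]
    nlinarith [mul_le_mul_of_nonneg_left key hm]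
  exact le_of_sq_le_sq this (norm_nonneg _)

/-- If `F` is `α`-cocoercive with `α > 1/2`, then the Davis–Yin operator
`T z = z - P₁ z + P₂ (2 • P₁ z - z - F (P₁ z))` (with `P₁, P₂` the metric projections
onto nonempty closed convex sets `C₁, C₂`) is averaged: `T = (1 - λ) • Id + λ • S` for
some `λ ∈ (0, 1)` and some nonexpansive map `S`. -/
theorem stmt_9 {X : Type*} [NormedAddCommGroup X] [InnerProductSpace ℝ X] [CompleteSpace X]
    (C₁ C₂ : Set X)
    (h₁ne : C₁.Nonempty) (h₁cl : IsClosed C₁) (h₁cv : Convex ℝ C₁)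
    (h₂ne : C₂.Nonempty) (h₂cl : IsClosed C₂) (h₂cv : Convex ℝ C₂)
    (P₁ P₂ : X → X)
    (hP₁ : ∀ z, P₁ z ∈ C₁ ∧ ∀ x ∈ C₁, ‖z - P₁ z‖ ≤ ‖z - x‖)
    (hP₂ : ∀ z, P₂ z ∈ C₂ ∧ ∀ x ∈ C₂, ‖z - P₂ z‖ ≤ ‖z - x‖)
    (F : X → X) (α : ℝ) (hα : 1 / 2 < α)
    (hF : ∀ x y : X, α * ‖F x - F y‖ ^ 2 ≤ ⟪F x - F y, x - y⟫)
    (T : X → X)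
    (hT : ∀ z, T z = z - P₁ z + P₂ ((2 : ℝ) • P₁ z - z - F (P₁ z))) :
    ∃ lam : ℝ, 0 < lam ∧ lam < 1 ∧ ∃ S : X → X, LipschitzWith 1 S ∧
      ∀ z, T z = (1 - lam) • z + lam • S z := by
  have hα0 : 0 < α := by linarith
  have hb1 : 1 / (2 * α) < 1 := by rw [div_lt_one (by linarith)]; linarith
  have hm : 1 < 2 - 1 / (2 * α) := by linarith
  refine ⟨(2 - 1 / (2 * α))⁻¹, by positivity, inv_lt_one_of_one_lt₀ hm,
    fun z => z + (2 - 1 / (2 * α)) • (T z - z), ?_, ?_⟩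
  · refine LipschitzWith.of_dist_le_mul fun z y => ?_
    rw [dist_eq_norm, dist_eq_norm, NNReal.coe_one, one_mul]
    have h2 := proj_firm C₂ h₂cv P₂ hP₂ ((2 : ℝ) • P₁ z - z - F (P₁ z))
      ((2 : ℝ) • P₁ y - y - F (P₁ y))
    have k := dy_key (z - y) (P₁ z - P₁ y) (F (P₁ z) - F (P₁ y))
      (P₂ ((2 : ℝ) • P₁ z - z - F (P₁ z)) - P₂ ((2 : ℝ) • P₁ y - y - F (P₁ y))) α hα
      (proj_firm C₁ h₁cv P₁ hP₁ z y) (by convert h2 using 2; module) (hF _ _)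
    refine le_of_eq_of_le (congrArg norm ?_) k
    simp only [hT]; module
  · intro z
    rw [smul_add, smul_smul, inv_mul_cancel₀ (by positivity)]
    module
end

section
/- Let X be a finite-dimensional real inner product space and let T : X → X be an averaged operator whose fixed point set {z : T(z) = z} is nonempty. Then for every initial point z¹ ∈ X, the sequence defined by z^{n+1} = T(z^n) converges to some fixed point z∘ of T. -/
open RealInnerProductSpace

/-- Krasnosel'skiĭ–Mann: in a finite-dimensional real inner product space, the fixed
point iteration of an averaged operator `T` (i.e. `T = (1 - λ) • Id + λ • S` with
`λ ∈ (0, 1)` and `S` nonexpansive) with a nonempty fixed point set converges, from any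
initial point, to a fixed point of `T`. -/
theorem stmt_10 {X : Type*} [NormedAddCommGroup X] [InnerProductSpace ℝ X]
    [FiniteDimensional ℝ X]
    (T : X → X)
    (havg : ∃ lam : ℝ, 0 < lam ∧ lam < 1 ∧ ∃ S : X → X, LipschitzWith 1 S ∧
      ∀ z, T z = (1 - lam) • z + lam • S z)
    (hfix : ∃ z, T z = z) (z₁ : X) :
    ∃ z₀ : X, T z₀ = z₀ ∧
      Filter.Tendsto (fun n : ℕ => T^[n] z₁) Filter.atTop (nhds z₀) := by
  obtain ⟨l, h0, h1, S, hS, hT⟩ := havg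
  obtain ⟨p, hp⟩ := hfix
  have : ProperSpace X := FiniteDimensional.proper_real X
  have hpos : 0 < l * (1 - l) := mul_pos h0 (by linarith)
  have key : ∀ q, T q = q → ∀ z,
      ‖T z - q‖ ^ 2 + l * (1 - l) * ‖S z - z‖ ^ 2 ≤ ‖z - q‖ ^ 2 := by
    intro q hq z
    have hSq : S q = q := by
      have h : l • (S q - q) = 0 := by
        have h2 := hT q
        rw [hq] at h2
        calc l • (S q - q) = ((1 - l) • q + l • S q) - q := by module
          _ = 0 := by rw [← h2, sub_self]
      rcases smul_eq_zero.mp h with h | h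
      · exact absurd h h0.ne'
      · exact sub_eq_zero.mp h
    have hv : ‖S z - q‖ ≤ ‖z - q‖ := by
      have := hS.dist_le_mul z q
      rw [hSq] at this
      simpa [dist_eq_norm] using this
    have e1 : T z - q = (1 - l) • (z - q) + l • (S z - q) := by rw [hT]; module
    have e2 : S z - z = (S z - q) - (z - q) := by abel
    have hv2 : ‖S z - q‖ ^ 2 ≤ ‖z - q‖ ^ 2 := by gcongr
    rw [e1, e2, norm_add_sq_real, norm_sub_sq_real, norm_smul, norm_smul, inner_smul_left,
      inner_smul_right, mul_pow, mul_pow, Real.norm_eq_abs, Real.norm_eq_abs, sq_abs, sq_abs,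
      real_inner_comm (z - q) (S z - q)]
    simp only [conj_trivial]
    nlinarith [mul_le_mul_of_nonneg_left hv2 h0.le]
  have keyn : ∀ q, T q = q → ∀ n : ℕ, ‖T^[n+1] z₁ - q‖ ^ 2 +
      l * (1 - l) * ‖S (T^[n] z₁) - T^[n] z₁‖ ^ 2 ≤ ‖T^[n] z₁ - q‖ ^ 2 := by
    intro q hq n
    rw [Function.iterate_succ_apply']
    exact key q hq _
  have anti : ∀ q, T q = q → Antitone (fun n : ℕ => ‖T^[n] z₁ - q‖ ^ 2) := by
    intro q hq
    refine antitone_nat_of_succ_le fun n => ?_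
    have := keyn q hq n
    have : 0 ≤ l * (1 - l) * ‖S (T^[n] z₁) - T^[n] z₁‖ ^ 2 := by positivity
    linarith
  have conv : ∀ q, T q = q → ∃ a, Filter.Tendsto (fun n : ℕ => ‖T^[n] z₁ - q‖ ^ 2)
      Filter.atTop (nhds a) := fun q hq =>
    ⟨_, tendsto_atTop_ciInf (anti q hq) ⟨0, by rintro _ ⟨n, rfl⟩; positivity⟩⟩
  have hres : Filter.Tendsto (fun n : ℕ => l * (1 - l) * ‖S (T^[n] z₁) - T^[n] z₁‖ ^ 2)
      Filter.atTop (nhds 0) := by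
    obtain ⟨a, ha⟩ := conv p hp
    have hd := ha.sub (ha.comp (Filter.tendsto_add_atTop_nat 1))
    rw [sub_self] at hd
    refine squeeze_zero (fun n => by positivity) (fun n => ?_) hd
    have := keyn p hp n
    simp only [Function.comp]
    linarith
  have hb : ∀ n : ℕ, T^[n] z₁ ∈ Metric.closedBall p ‖z₁ - p‖ := by
    intro n
    rw [mem_closedBall_iff_norm]
    have := anti p hp (Nat.zero_le n)
    exact le_of_sq_le_sq this (norm_nonneg _)
  obtain ⟨q, -, φ, hφ, hq⟩ := tendsto_subseq_of_bounded Metric.isBounded_closedBall hb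
  have hSq : S q = q := by
    have c : Continuous (fun z => l * (1 - l) * ‖S z - z‖ ^ 2) := by
      have := hS.continuous
      fun_prop
    have t1 := (c.tendsto q).comp hq
    have t2 := hres.comp hφ.tendsto_atTop
    have h := tendsto_nhds_unique t1 t2
    have h2 : ‖S q - q‖ ^ 2 = 0 := (mul_eq_zero.mp h).resolve_left hpos.ne'
    exact sub_eq_zero.mp (norm_eq_zero.mp (pow_eq_zero_iff two_ne_zero |>.mp h2))
  have hTq : T q = q := by rw [hT, hSq]; module
  refine ⟨q, hTq, ?_⟩
  obtain ⟨a, ha⟩ := conv q hTq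
  have ha0 : a = 0 := by
    have c : Continuous (fun z => ‖z - q‖ ^ 2) := by fun_prop
    have t1 := (c.tendsto q).comp hq
    have t2 := ha.comp hφ.tendsto_atTop
    have h := tendsto_nhds_unique t2 t1
    simpa using h
  rw [ha0] at ha
  rw [tendsto_iff_norm_sub_tendsto_zero]
  have := (Real.continuous_sqrt.tendsto 0).comp ha
  simpa [Function.comp_def, Real.sqrt_sq] using this
end

section
/- Let X be a real inner product space, K ≥ 1 an integer, and let X̄ = X^K be the product space with inner product ⟨x̄, ȳ⟩ = Σ_{k=1}^K ⟨x̄_k, ȳ_k⟩. Define Q⁻ : X̄ → X by Q⁻(x̄) = Σ_{k=1}^K x̄_k and Q⁺ : X → X̄ by Q⁺(x) = (x, …, x). If F : X → X is α-cocoercive (α > 0), then the composition Q⁺ ∘ F ∘ Q⁻ : X̄ → X̄ is (α/K)-cocoercive with respect to the product inner product. -/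
open RealInnerProductSpace

/-- If `F : X → X` is `α`-cocoercive, then `Q⁺ ∘ F ∘ Q⁻` is `(α / K)`-cocoercive on the
product space `X̄ = Xᴷ` (with the product inner product, i.e. `PiLp 2`), where
`Q⁻ xb = ∑ k, xb k` and `Q⁺ x = (x, …, x)`. -/
theorem stmt_12 {X : Type*} [NormedAddCommGroup X] [InnerProductSpace ℝ X]
    (K : ℕ) (hK : 1 ≤ K)
    (F : X → X) (α : ℝ) (hα : 0 < α)
    (hF : ∀ x y : X, α * ‖F x - F y‖ ^ 2 ≤ ⟪F x - F y, x - y⟫)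
    (G : PiLp 2 (fun _ : Fin K => X) → PiLp 2 (fun _ : Fin K => X))
    (hG : ∀ (xb : PiLp 2 (fun _ : Fin K => X)) (k : Fin K), G xb k = F (∑ j, xb j)) :
    ∀ xb yb : PiLp 2 (fun _ : Fin K => X),
      (α / K) * ‖G xb - G yb‖ ^ 2 ≤ ⟪G xb - G yb, xb - yb⟫ := by
  intro xb yb
  have hK0 : (K : ℝ) ≠ 0 := by
    have : K ≠ 0 := by omega
    exact_mod_cast this
  have h := hF (∑ j, xb j) (∑ j, yb j)
  rw [PiLp.norm_sq_eq_of_L2, PiLp.inner_apply]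
  simp only [PiLp.sub_apply, hG]
  rw [← inner_sum, Finset.sum_sub_distrib, Finset.sum_const, Finset.card_univ, Fintype.card_fin,
    nsmul_eq_mul, ← mul_assoc, div_mul_cancel₀ _ hK0]
  exact h
end

section
/- Let X be a real inner product space, K ≥ 1 an integer, and X̄ = X^K the product space with inner product ⟨x̄, ȳ⟩ = Σ_{k=1}^K ⟨x̄_k, ȳ_k⟩. Let C_1, …, C_K ⊆ X be nonempty convex sets, let A = C_1 × ⋯ × C_K ⊆ X̄, and let C = C_1 + ⋯ + C_K ⊆ X be their Minkowski sum. Let F : X → X be any map. Then for every x̄∘ ∈ A, the point x̄∘ is a solution of the variational inequality VI(Q⁺ ∘ F ∘ Q⁻, A) in X̄ if and only if Q⁻(x̄∘) is a solution of the variational inequality VI(F, C) in X. -/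
open RealInnerProductSpace

/-- Minkowski-sum decoupling: with `A = C₁ × ⋯ × C_K ⊆ X̄ = Xᴷ` (product inner product,
`PiLp 2`), `C = C₁ + ⋯ + C_K ⊆ X` the Minkowski sum, `Q⁻ xb = ∑ k, xb k`, `Q⁺` the
diagonal map, and `G = Q⁺ ∘ F ∘ Q⁻`, a point `xb₀ ∈ A` solves `VI(G, A)` iff
`Q⁻ xb₀` solves `VI(F, C)`. -/
theorem stmt_13 {X : Type*} [NormedAddCommGroup X] [InnerProductSpace ℝ X]
    (K : ℕ) (hK : 1 ≤ K)
    (C : Fin K → Set X) (hCne : ∀ k, (C k).Nonempty) (hCcv : ∀ k, Convex ℝ (C k))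
    (F : X → X)
    (G : PiLp 2 (fun _ : Fin K => X) → PiLp 2 (fun _ : Fin K => X))
    (hG : ∀ (xb : PiLp 2 (fun _ : Fin K => X)) (k : Fin K), G xb k = F (∑ j, xb j))
    (Csum : Set X)
    (hCsum : Csum = {x : X | ∃ c : Fin K → X, (∀ k, c k ∈ C k) ∧ x = ∑ k, c k})
    (xb₀ : PiLp 2 (fun _ : Fin K => X)) (hxb₀ : ∀ k, xb₀ k ∈ C k) :
    ((∀ k, xb₀ k ∈ C k) ∧
        ∀ yb : PiLp 2 (fun _ : Fin K => X), (∀ k, yb k ∈ C k) → 0 ≤ ⟪G xb₀, yb - xb₀⟫) ↔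
      ((∑ k, xb₀ k) ∈ Csum ∧ ∀ w ∈ Csum, 0 ≤ ⟪F (∑ k, xb₀ k), w - ∑ k, xb₀ k⟫) := by
  have key : ∀ yb : PiLp 2 (fun _ : Fin K => X),
      ⟪G xb₀, yb - xb₀⟫ = ⟪F (∑ k, xb₀ k), (∑ k, yb k) - ∑ k, xb₀ k⟫ := by
    intro yb
    rw [PiLp.inner_apply, ← Finset.sum_sub_distrib, inner_sum]
    refine Finset.sum_congr rfl fun k _ => ?_
    rw [hG, PiLp.sub_apply]
  subst hCsum
  constructor
  · rintro ⟨h1, h2⟩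
    refine ⟨⟨fun k => xb₀ k, h1, rfl⟩, ?_⟩
    rintro w ⟨c, hc, rfl⟩
    have h := h2 (WithLp.toLp 2 c) hc
    rw [key] at h
    exact h
  · rintro ⟨_, h2⟩
    refine ⟨hxb₀, fun yb hyb => ?_⟩
    rw [key]
    exact h2 _ ⟨fun k => yb k, hyb, rfl⟩
end
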